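/- arXiv:1603.05457 — 5 statements merged into one kernel-verified Lean document; each statement's English description precedes it below -/
import Mathlib

section
/- Let X be a metric space, let f_n : X → X for n ≥ 0, and let k be a positive integer such that f_i is continuous on X for each 0 ≤ i ≤ k−1. If the non-autonomous system x_{n+1} = f_n(x_n) (n ≥ 0) is sensitive at a point x_0 ∈ X with sensitivity constant δ > 0, then the shifted system x_{n+1} = f_n(x_n) (n ≥ k) is sensitive at the point x_k = f_0^k(x_0) with the same sensitivity constant δ; that is, for any neighborhood V of x_k there exist z_0 ∈ V and a positive integer m such that d(f_k^m(z_0), f_k^m(x_k)) > δ, where f_k^m := f_{k+m−1} ∘ ⋯ ∘ f_k. -/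
open Filter Topology

/-- Iterates of a non-autonomous system: `iterSeq f n = f_{n-1} ∘ ⋯ ∘ f_0`. -/
def iterSeq {X : Type*} (f : ℕ → X → X) : ℕ → X → X
  | 0 => id
  | n + 1 => f n ∘ iterSeq f n

/-- If the system `x_{n+1} = f_n(x_n)` (n ≥ 0) is sensitive at `x0` with sensitivity
constant `δ`, and `f_0, …, f_{k-1}` are continuous, then the shifted system
`x_{n+1} = f_n(x_n)` (n ≥ k) is sensitive at `x_k = f_0^k(x0)` with the same constant. -/
theorem shifted_system_sensitive {X : Type*} [MetricSpace X] (f : ℕ → X → X)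
    (k : ℕ) (hk : 0 < k) (hcont : ∀ i, i ≤ k - 1 → Continuous (f i))
    (x0 : X) (δ : ℝ) (hδ : 0 < δ)
    (hsens : ∀ U ∈ 𝓝 x0, ∃ y0 ∈ U, ∃ N : ℕ, 0 < N ∧
      δ < dist (iterSeq f N y0) (iterSeq f N x0)) :
    ∀ V ∈ 𝓝 (iterSeq f k x0), ∃ z0 ∈ V, ∃ m : ℕ, 0 < m ∧
      δ < dist (iterSeq (fun n => f (k + n)) m z0)
            (iterSeq (fun n => f (k + n)) m (iterSeq f k x0)) := by
  have hc : ∀ j, j ≤ k → Continuous (iterSeq f j) := by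
    intro j
    induction j with
    | zero => intro _; exact continuous_id
    | succ j ih => intro hj; exact (hcont j (by omega)).comp (ih (by omega))
  have hadd : ∀ m y, iterSeq f (k + m) y
      = iterSeq (fun n => f (k + n)) m (iterSeq f k y) := by
    intro m y
    induction m with
    | zero => rfl
    | succ m ih => exact congrArg (f (k + m)) ih
  intro V hV
  have h1 : ∀ᶠ y in 𝓝 x0, iterSeq f k y ∈ V := (hc k le_rfl).continuousAt hV
  have h2 : ∀ᶠ y in 𝓝 x0, ∀ j ∈ Set.Iic k,
      dist (iterSeq f j y) (iterSeq f j x0) < δ := by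
    rw [Filter.eventually_all_finite (Set.finite_Iic k)]
    intro j hj
    exact (hc j hj).continuousAt (Metric.ball_mem_nhds _ hδ)
  obtain ⟨y, ⟨hy1, hy2⟩, N, hN, hd⟩ := hsens _ (h1.and h2)
  have hkN : k < N := by
    by_contra h
    exact absurd (hy2 N (not_lt.mp h)) (not_lt.mpr hd.le)
  obtain ⟨m, rfl⟩ := Nat.exists_eq_add_of_lt hkN
  refine ⟨iterSeq f k y, hy1, m + 1, Nat.succ_pos m, ?_⟩
  rw [← hadd, ← hadd]
  exact hd
end

section
/- Let I be a non-degenerate interval, let f_n : I → I be a C¹ map for each n ≥ 0, let x_0 ∈ I, and let {x_n} be the orbit of the system x_{n+1} = f_n(x_n) starting from x_0. Assume that the sequence of derivatives {f_n′}_{n=0}^∞ is equi-continuous in I and that M := inf{ |f_n′(x_k)| : n, k ≥ 0 } > 0. If the Lyapunov exponent λ(x_0) = limsup_{n→∞} (1/n) Σ_{k=0}^{n−1} ln|f_k′(x_k)| is positive, then the system is strongly sensitive at x_0; that is, there exist δ > 0 and a neighborhood U of x_0 such that for every y_0 ∈ U with y_0 ≠ x_0 there is a positive integer N with |f_0^N(y_0)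 − f_0^N(x_0)| > δ. -/
open Filter Topology

/-- The Lyapunov exponent `λ(x0) := limsup (1/n) ∑_{k<n} ln|f_k'(x_k)|` (in the
extended reals), where `x_k = f_0^k(x0)` is the orbit of `x0`. -/
noncomputable def lyapExp (f f' : ℕ → ℝ → ℝ) (x0 : ℝ) : EReal :=
  Filter.limsup (fun n : ℕ => ((1 / (n:ℝ)) * ∑ k ∈ Finset.range n,
    Real.log |f' k (iterSeq f k x0)| : EReal)) Filter.atTop

lemma mvt_aux (I : Set ℝ) (hIoc : I.OrdConnected) (g g' : ℝ → ℝ)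
    (hd : ∀ x ∈ I, HasDerivWithinAt g (g' x) I x) (a b : ℝ) (ha : a ∈ I) (hb : b ∈ I)
    (hab : a < b) : ∃ z ∈ Set.Ioo a b, g b - g a = g' z * (b - a) := by
  have hsub : Set.Icc a b ⊆ I := hIoc.out ha hb
  obtain ⟨z, hz, h⟩ := exists_hasDerivAt_eq_slope g g' hab
    (fun x hx => ((hd x (hsub hx)).continuousWithinAt).mono hsub)
    (fun x hx => (hd x (hsub (Set.Ioo_subset_Icc_self hx))).hasDerivAt
      (Filter.mem_of_superset (Icc_mem_nhds hx.1 hx.2) hsub))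
  refine ⟨z, hz, ?_⟩
  have : b - a ≠ 0 := by linarith
  rw [h]; field_simp

lemma expand_aux (I : Set ℝ) (hIoc : I.OrdConnected) (g g' : ℝ → ℝ)
    (hd : ∀ x ∈ I, HasDerivWithinAt g (g' x) I x) (x y d C : ℝ) (hx : x ∈ I) (hy : y ∈ I)
    (hxy : |y - x| < d) (hC : ∀ z ∈ I, |x - z| < d → C ≤ |g' z|) :
    C * |y - x| ≤ |g y - g x| := by
  rcases lt_trichotomy x y with h | h | h
  · obtain ⟨z, hz, he⟩ := mvt_aux I hIoc g g' hd x y hx hy h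
    rw [he, abs_mul]
    refine mul_le_mul_of_nonneg_right (hC z (hIoc.out hx hy ⟨hz.1.le, hz.2.le⟩) ?_) (abs_nonneg _)
    rw [abs_lt] at *
    constructor <;> linarith [hz.1, hz.2]
  · subst h; simp
  · obtain ⟨z, hz, he⟩ := mvt_aux I hIoc g g' hd y x hy hx h
    rw [abs_sub_comm (g y), he, abs_mul, abs_sub_comm y x]
    refine mul_le_mul_of_nonneg_right (hC z (hIoc.out hy hx ⟨hz.1.le, hz.2.le⟩) ?_) (abs_nonneg _)
    rw [abs_lt] at *
    constructor <;> linarith [hz.1, hz.2]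

lemma lyap_aux (f f' : ℕ → ℝ → ℝ) (x0 : ℝ) (hpos : 0 < lyapExp f f' x0) :
    ∃ c > (0:ℝ), ∃ᶠ n : ℕ in atTop,
      c * n ≤ ∑ k ∈ Finset.range n, Real.log |f' k (iterSeq f k x0)| := by
  obtain ⟨c, hc0, hc⟩ := EReal.lt_iff_exists_real_btwn.1 hpos
  refine ⟨c, by exact_mod_cast hc0, ?_⟩
  have := Filter.frequently_lt_of_lt_limsup (by isBoundedDefault) hc
  refine (this.and_eventually (eventually_gt_atTop 0)).mono ?_
  rintro n ⟨h, hn⟩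
  have hn' : (0:ℝ) < n := by exact_mod_cast hn
  have h2 : c < (1 / (n:ℝ)) * ∑ k ∈ Finset.range n, Real.log |f' k (iterSeq f k x0)| := by
    rw [← EReal.coe_lt_coe_iff]
    push_cast
    exact h
  rw [one_div, inv_mul_eq_div, lt_div_iff₀ hn'] at h2
  exact h2.le

/-- Theorem 3.1: `I` a non-degenerate interval, `f n : I → I` C¹ maps with derivatives
`f' n`, `{f' n}` equi-continuous in `I`, `inf{|f_n'(x_k)| : n,k ≥ 0} > 0`.  If
`λ(x0) > 0`, then the system is strongly sensitive at `x0`. -/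
theorem positive_lyapunov_exponent_implies_strong_sensitivity
    (I : Set ℝ) (hIoc : I.OrdConnected) (hInd : ∃ p ∈ I, ∃ q ∈ I, p ≠ q)
    (f f' : ℕ → ℝ → ℝ)
    (hmaps : ∀ n, Set.MapsTo (f n) I I)
    (hderiv : ∀ n, ∀ x ∈ I, HasDerivWithinAt (f n) (f' n x) I x)
    (hcont : ∀ n, ContinuousOn (f' n) I)
    (x0 : ℝ) (hx0 : x0 ∈ I)
    -- {f_n'} is equi-continuous in I
    (hec : ∀ ε > (0:ℝ), ∃ δ > (0:ℝ), ∀ n : ℕ, ∀ x ∈ I, ∀ y ∈ I,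
      |x - y| < δ → |f' n x - f' n y| < ε)
    -- M := inf{ |f_n'(x_k)| : n, k ≥ 0 } > 0
    (hM : ∃ M > (0:ℝ), ∀ n k : ℕ, M ≤ |f' n (iterSeq f k x0)|)
    -- positive Lyapunov exponent at x0
    (hpos : 0 < lyapExp f f' x0) :
    -- strong sensitivity at x0
    ∃ δ > (0:ℝ), ∃ U ∈ 𝓝 x0, ∀ y0 ∈ U, y0 ∈ I → y0 ≠ x0 →
      ∃ N : ℕ, 0 < N ∧ δ < |iterSeq f N y0 - iterSeq f N x0| := by
  classical
  obtain ⟨M, hM0, hM⟩ := hM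
  obtain ⟨c, hc0, hfreq⟩ := lyap_aux f f' x0 hpos
  have hr : Real.exp (-(c/2)) < 1 := by rw [Real.exp_lt_one_iff]; linarith
  obtain ⟨d, hd0, hd⟩ := hec (M * (1 - Real.exp (-(c/2)))) (mul_pos hM0 (by linarith))
  refine ⟨d/2, by linarith, Metric.ball x0 d, Metric.ball_mem_nhds _ hd0, ?_⟩
  intro y0 hy0U hy0 hne
  by_contra! hcon
  have hI : ∀ x ∈ I, ∀ n, iterSeq f n x ∈ I := by
    intro x hx n
    induction n with
    | zero => exact hx
    | succ n ih => exact hmaps n ih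
  have hclose : ∀ n, |iterSeq f n y0 - iterSeq f n x0| < d := by
    intro n
    rcases Nat.eq_zero_or_pos n with rfl | hn
    · simpa [iterSeq, Real.dist_eq] using hy0U
    · linarith [hcon n hn]
  have hgrow : ∀ n : ℕ, Real.exp (∑ k ∈ Finset.range n,
      Real.log |f' k (iterSeq f k x0)| - c/2 * n) * |y0 - x0|
      ≤ |iterSeq f n y0 - iterSeq f n x0| := by
    intro n
    induction n with
    | zero => simp [iterSeq]
    | succ n ih =>
      have hap : 0 < |f' n (iterSeq f n x0)| := hM0.trans_le (hM n n)
      have key := expand_aux I hIoc (f n) (f' n) (hderiv n) (iterSeq f n x0) (iterSeq f n y0) d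
        (|f' n (iterSeq f n x0)| * Real.exp (-(c/2))) (hI _ hx0 n) (hI _ hy0 n) (hclose n)
        (by
          intro z hz hzd
          have h1 := hd n _ (hI _ hx0 n) z hz hzd
          have h2 := abs_sub_abs_le_abs_sub (f' n (iterSeq f n x0)) (f' n z)
          nlinarith [hM n n])
      refine le_trans ?_ key
      refine le_trans (le_of_eq ?_) (mul_le_mul_of_nonneg_left ih (by positivity))
      rw [Finset.sum_range_succ]
      push_cast
      rw [show ∀ S L : ℝ, S + L - c/2 * ((n:ℝ)+1) = L + -(c/2) + (S - c/2 * n) by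
        intros; ring, Real.exp_add, Real.exp_add, Real.exp_log hap]
      ring
  have hp : 0 < |y0 - x0| := abs_pos.2 (sub_ne_zero.2 hne)
  obtain ⟨K, hK⟩ := exists_nat_gt (d / (c/2 * |y0 - x0|))
  obtain ⟨n, hn, hnK⟩ := (hfreq.and_eventually (eventually_ge_atTop K)).exists
  rw [div_lt_iff₀ (by positivity)] at hK
  have h1 := (hgrow n).trans_lt (hclose n)
  have h2 : c/2 * n ≤ Real.exp (∑ k ∈ Finset.range n,
      Real.log |f' k (iterSeq f k x0)| - c/2 * n) := by
    refine le_trans ?_ (Real.add_one_le_exp _)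
    linarith
  have h3 : (K:ℝ) ≤ n := by exact_mod_cast hnK
  have h4 : c/2 * n * |y0 - x0| < d := (mul_le_mul_of_nonneg_right h2 hp.le).trans_lt h1
  have h5 : (K:ℝ) * (c/2 * |y0 - x0|) ≤ n * (c/2 * |y0 - x0|) :=
    mul_le_mul_of_nonneg_right h3 (by positivity)
  linarith
end

section
/- Let I be a non-degenerate, closed, and bounded interval, let f_n : I → I be a C² map for each n ≥ 0, and let x_0 ∈ I. Assume that the sequence of second derivatives {f_n″}_{n=0}^∞ is uniformly bounded on I, i.e., there exists M > 0 with |f_n″(x)| ≤ M for all x ∈ I and n ≥ 0. If −∞ < λ(x_0) < 0 and 2λ(x_0) < λ_0(x_0), then the system x_{n+1} = f_n(x_n) is exponentially asymptotically stable at x_0; that is, there exist positive constants δ, C, and μ such that |f_0^n(y_0) − f_0^n(x_0)| ≤ C·exp(−μn) for each n ≥ 0 and every y_0 ∈ I with |y_0 − x_0| < δ. -/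
open Filter Topology

/-- The Lyapunov exponent `λ(x0) := limsup (1/n) ∑_{k<n} ln|f_k'(x_k)|` (in the
extended reals), where `x_k = f_0^k(x0)` is the orbit of `x0`. -/
noncomputable def lyapExpSup (f f' : ℕ → ℝ → ℝ) (x0 : ℝ) : EReal :=
  Filter.limsup (fun n : ℕ => ((1 / (n:ℝ)) * ∑ k ∈ Finset.range n,
    Real.log |f' k (iterSeq f k x0)| : EReal)) Filter.atTop

/-- The lower Lyapunov exponent `λ₀(x0) := liminf (1/n) ∑_{k<n} ln|f_k'(x_k)|`. -/
noncomputable def lyapExpInf (f f' : ℕ → ℝ → ℝ) (x0 : ℝ) : EReal :=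
  Filter.liminf (fun n : ℕ => ((1 / (n:ℝ)) * ∑ k ∈ Finset.range n,
    Real.log |f' k (iterSeq f k x0)| : EReal)) Filter.atTop

lemma taylor_aux (a b : ℝ) (f f' f'' : ℝ → ℝ)
    (hd : ∀ x ∈ Set.Icc a b, HasDerivWithinAt f (f' x) (Set.Icc a b) x)
    (hd2 : ∀ x ∈ Set.Icc a b, HasDerivWithinAt f' (f'' x) (Set.Icc a b) x)
    (M : ℝ) (hM : 0 < M) (hbd : ∀ x ∈ Set.Icc a b, |f'' x| ≤ M)
    (x y : ℝ) (hx : x ∈ Set.Icc a b) (hy : y ∈ Set.Icc a b) :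
    |f y - f x| ≤ |f' x| * |y - x| + M * |y - x| ^ 2 := by
  have hsub : Set.uIcc x y ⊆ Set.Icc a b := Set.uIcc_subset_Icc hx hy
  have h1 : ∀ t ∈ Set.uIcc x y, |f' t - f' x| ≤ M * |y - x| := by
    intro t ht
    have := (convex_Icc a b).norm_image_sub_le_of_norm_hasDerivWithin_le
      (f := f') (f' := f'') (C := M) hd2 (by simpa using hbd) hx (hsub ht)
    simp only [Real.norm_eq_abs] at this
    refine this.trans ?_
    gcongr 1
    exact Set.abs_sub_left_of_mem_uIcc ht
  have h2 := (convex_uIcc x y).norm_image_sub_le_of_norm_hasDerivWithin_le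
      (f := fun t => f t - f' x * t) (f' := fun t => f' t - f' x) (C := M * |y - x|)
      (fun t ht => by
        have h := ((hd t (hsub ht)).mono hsub).sub
          (((hasDerivWithinAt_id t (Set.uIcc x y)).const_mul (f' x)))
        simp only [id, mul_one] at h
        exact h) (by simpa using h1) Set.left_mem_uIcc Set.right_mem_uIcc
  simp only [Real.norm_eq_abs] at h2
  have h3 : f y - f x = (f y - f' x * y - (f x - f' x * x)) + f' x * (y - x) := by ring
  rw [h3]
  calc _ ≤ |f y - f' x * y - (f x - f' x * x)| + |f' x * (y - x)| := abs_add_le _ _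
    _ ≤ M * |y - x| * |y - x| + |f' x| * |y - x| := by rw [abs_mul]; gcongr
    _ = _ := by ring

lemma bound_aux (u : ℕ → ℝ) (h : ∀ᶠ n in atTop, u n ≤ 0) : ∃ K, ∀ n, u n ≤ K := by
  have : IsBoundedUnder (· ≤ ·) atTop u := ⟨0, by simpa using h⟩
  obtain ⟨K, hK⟩ := this.bddAbove_range
  exact ⟨K, fun n => hK ⟨n, rfl⟩⟩

lemma avg_cast (n : ℕ) (u : ℕ → ℝ) :
    ((1 / (n:ℝ)) * ∑ k ∈ Finset.range n, u k : EReal)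
      = (((1 / (n:ℝ)) * ∑ k ∈ Finset.range n, u k : ℝ) : EReal) := by
  have hs : ((∑ k ∈ Finset.range n, u k : ℝ) : EReal) = ∑ k ∈ Finset.range n, (u k : EReal) := by
    induction n with
    | zero => simp
    | succ n ih => rw [Finset.sum_range_succ, Finset.sum_range_succ, EReal.coe_add, ih]
  rw [EReal.coe_mul, EReal.coe_div, EReal.coe_one]
  try rw [hs]

/-- The scalar recursion argument. -/
lemma rec_aux (z g S : ℕ → ℝ) (M K L α β : ℝ) (hM : 0 < M) (hz : ∀ n, 0 ≤ z n)
    (hS0 : S 0 = 0) (hS : ∀ n, Real.exp (S (n+1)) = Real.exp (S n) * g n)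
    (hg : ∀ n, 0 < g n) (hrec : ∀ n, z (n+1) ≤ g n * z n + M * z n ^ 2)
    (hK : ∀ n, S n ≤ K + α * n) (hL : ∀ n, β * n - L ≤ S n) (q A : ℝ)
    (hq : q = Real.exp (2 * α - β)) (hq1 : q < 1) (hA : A = Real.exp (2 * K + L - β) / (1 - q))
    (hz0 : 4 * M * A * z 0 ≤ 1) (n : ℕ) :
    z n ≤ 2 * z 0 * Real.exp (S n) := by
  have hq0 : 0 < q := hq ▸ Real.exp_pos _
  have key : ∀ n, z n ≤ (z 0 + 4 * M * A * z 0 ^ 2 * (1 - q ^ n)) * Real.exp (S n) ∧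
      z n ≤ 2 * z 0 * Real.exp (S n) := by
    have hA0 : 0 < A := by rw [hA]; exact div_pos (Real.exp_pos _) (by linarith)
    have step : ∀ n, z n ≤ (z 0 + 4 * M * A * z 0 ^ 2 * (1 - q ^ n)) * Real.exp (S n) →
        z n ≤ 2 * z 0 * Real.exp (S n) := by
      intro n h
      refine h.trans ?_
      gcongr
      have h1 : 0 ≤ q ^ n := by positivity
      have h2 : 4 * M * A * z 0 ^ 2 * (1 - q ^ n) ≤ 4 * M * A * z 0 ^ 2 * 1 := by
        have := hz 0
        gcongr
        linarith
      have h3 := mul_le_mul_of_nonneg_right hz0 (hz 0)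
      nlinarith
    intro n
    induction n with
    | zero => exact ⟨by simp [hS0], step 0 (by simp [hS0])⟩
    | succ n ih =>
      suffices h : _ from ⟨h, step _ h⟩
      obtain ⟨ih1, ih2⟩ := ih
      have hP : Real.exp (S n) ^ 2 ≤ A * (1 - q) * q ^ n * Real.exp (S (n+1)) := by
        have e1 : A * (1 - q) = Real.exp (2 * K + L - β) := by
          rw [hA]; field_simp [(by linarith : (1 - q) ≠ 0)]
        rw [e1, hq, ← Real.exp_nat_mul, ← Real.exp_nat_mul, ← Real.exp_add, ← Real.exp_add]
        apply Real.exp_le_exp.2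
        have a1 := hK n
        have a2 := hL (n+1)
        push_cast at a2 ⊢
        nlinarith
      calc z (n+1) ≤ g n * z n + M * z n ^ 2 := hrec n
        _ ≤ g n * ((z 0 + 4 * M * A * z 0 ^ 2 * (1 - q ^ n)) * Real.exp (S n))
            + M * (2 * z 0 * Real.exp (S n)) ^ 2 := by
          have := hz n
          have := hg n
          gcongr
        _ = (z 0 + 4 * M * A * z 0 ^ 2 * (1 - q ^ n)) * Real.exp (S (n+1))
            + 4 * M * z 0 ^ 2 * Real.exp (S n) ^ 2 := by rw [hS]; ring
        _ ≤ (z 0 + 4 * M * A * z 0 ^ 2 * (1 - q ^ n)) * Real.exp (S (n+1))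
            + 4 * M * z 0 ^ 2 * (A * (1 - q) * q ^ n * Real.exp (S (n+1))) := by gcongr
        _ = _ := by ring
  exact (key n).2

/-- Theorem 4.1: `I = [a,b]` a non-degenerate closed bounded interval, `f n : I → I`
C² maps with first and second derivatives `f' n`, `f'' n`, and `{f'' n}` uniformly
bounded on `I`.  If `-∞ < λ(x0) < 0` and `2λ(x0) < λ₀(x0)`, then the system is
exponentially asymptotically stable at `x0`. -/
theorem negative_lyapunov_exponent_implies_exponential_stability
    (a b : ℝ) (hab : a < b) (f f' f'' : ℕ → ℝ → ℝ)
    (hmaps : ∀ n, Set.MapsTo (f n) (Set.Icc a b) (Set.Icc a b))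
    (hderiv : ∀ n, ∀ x ∈ Set.Icc a b, HasDerivWithinAt (f n) (f' n x) (Set.Icc a b) x)
    (hderiv2 : ∀ n, ∀ x ∈ Set.Icc a b, HasDerivWithinAt (f' n) (f'' n x) (Set.Icc a b) x)
    (hcont2 : ∀ n, ContinuousOn (f'' n) (Set.Icc a b))
    -- {f_n''} is uniformly bounded in I
    (M : ℝ) (hM : 0 < M) (hbd : ∀ n : ℕ, ∀ x ∈ Set.Icc a b, |f'' n x| ≤ M)
    (x0 : ℝ) (hx0 : x0 ∈ Set.Icc a b)
    -- -∞ < λ(x0) < 0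
    (hgt : ⊥ < lyapExpSup f f' x0) (hlt : lyapExpSup f f' x0 < 0)
    -- 2λ(x0) < λ₀(x0)
    (h2 : 2 * lyapExpSup f f' x0 < lyapExpInf f f' x0) :
    -- exponential asymptotical stability at x0
    ∃ δ > (0:ℝ), ∃ C > (0:ℝ), ∃ μ > (0:ℝ), ∀ n : ℕ, ∀ y0 ∈ Set.Icc a b,
      |y0 - x0| < δ → |iterSeq f n y0 - iterSeq f n x0| ≤ C * Real.exp (-μ * n) := by
  have hmem : ∀ n, ∀ y ∈ Set.Icc a b, iterSeq f n y ∈ Set.Icc a b := by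
    intro n y hy
    induction n with
    | zero => exact hy
    | succ n ih => exact hmaps n ih
  obtain ⟨u, hu⟩ : ∃ u : ℕ → ℝ, u = fun k => Real.log |f' k (iterSeq f k x0)| := ⟨_, rfl⟩
  have hsup : lyapExpSup f f' x0 = limsup (fun n : ℕ =>
      (((1 / (n:ℝ)) * ∑ k ∈ Finset.range n, u k : ℝ) : EReal)) atTop := by
    unfold lyapExpSup
    congr 1
    funext n
    rw [← avg_cast, hu]
  have hinf : lyapExpInf f f' x0 = liminf (fun n : ℕ =>
      (((1 / (n:ℝ)) * ∑ k ∈ Finset.range n, u k : ℝ) : EReal)) atTop := by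
    unfold lyapExpInf
    congr 1
    funext n
    rw [← avg_cast, hu]
  obtain ⟨l, hl⟩ : ∃ l : ℝ, lyapExpSup f f' x0 = (l : EReal) :=
    ⟨_, (EReal.coe_toReal (ne_top_of_lt hlt) hgt.ne').symm⟩
  have hl0 : l < 0 := by rw [hl] at hlt; exact_mod_cast hlt
  have h2' : ((2 * l : ℝ) : EReal) < lyapExpInf f f' x0 := by
    rw [hl] at h2
    rw [EReal.coe_mul]
    exact h2
  obtain ⟨β, hβ1, hβ2⟩ := EReal.lt_iff_exists_real_btwn.1 h2'
  have hβ1' : 2 * l < β := by exact_mod_cast hβ1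
  obtain ⟨α, hα1, hα2⟩ := exists_between (lt_min hl0 (by linarith : l < β / 2))
  have hα0 : α < 0 := hα2.trans_le (min_le_left _ _)
  have hαβ : 2 * α - β < 0 := by linarith [hα2.trans_le (min_le_right _ _)]
  have ev1 : ∀ᶠ n : ℕ in atTop, (1 / (n:ℝ)) * ∑ k ∈ Finset.range n, u k < α := by
    have : limsup (fun n : ℕ =>
      (((1 / (n:ℝ)) * ∑ k ∈ Finset.range n, u k : ℝ) : EReal)) atTop < (α : EReal) := by
      rw [← hsup, hl]; exact_mod_cast hα1
    filter_upwards [eventually_lt_of_limsup_lt this] with n hn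
    exact_mod_cast hn
  have ev2 : ∀ᶠ n : ℕ in atTop, β < (1 / (n:ℝ)) * ∑ k ∈ Finset.range n, u k := by
    rw [hinf] at hβ2
    filter_upwards [eventually_lt_of_lt_liminf hβ2] with n hn
    exact_mod_cast hn
  obtain ⟨S, hS⟩ : ∃ S : ℕ → ℝ, S = fun n => ∑ k ∈ Finset.range n, u k := ⟨_, rfl⟩
  obtain ⟨K, hK⟩ := bound_aux (fun n => S n - α * n) (by
    filter_upwards [ev1, eventually_gt_atTop 0] with n hn hn0
    have : (0:ℝ) < n := by exact_mod_cast hn0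
    rw [one_div, inv_mul_lt_iff₀ this] at hn
    simp only [hS]
    linarith)
  obtain ⟨L, hL⟩ := bound_aux (fun n => β * n - S n) (by
    filter_upwards [ev2, eventually_gt_atTop 0] with n hn hn0
    have : (0:ℝ) < n := by exact_mod_cast hn0
    rw [one_div, lt_inv_mul_iff₀ this] at hn
    simp only [hS]
    linarith)
  obtain ⟨q, hq⟩ : ∃ q, q = Real.exp (2 * α - β) := ⟨_, rfl⟩
  have hq1 : q < 1 := by rw [hq]; rw [← Real.exp_zero]; exact Real.exp_lt_exp.2 hαβ
  obtain ⟨A, hA⟩ : ∃ A, A = Real.exp (2 * K + L - β) / (1 - q) := ⟨_, rfl⟩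
  have hA0 : 0 < A := by rw [hA]; exact div_pos (Real.exp_pos _) (by linarith)
  refine ⟨1 / (4 * M * A), by positivity, 2 * (1 / (4 * M * A)) * Real.exp K, by positivity,
    -α, by linarith, ?_⟩
  intro n y0 hy0 hlt0
  have main := rec_aux (fun n => |iterSeq f n y0 - iterSeq f n x0|) (fun n => Real.exp (u n)) S
    M K L α β hM (fun n => abs_nonneg _) (by simp [hS])
    (fun n => by simp only [hS]; rw [Finset.sum_range_succ, Real.exp_add])
    (fun n => Real.exp_pos _)
    (fun n => by
      have h := taylor_aux a b (f n) (f' n) (f'' n) (hderiv n) (hderiv2 n) M hM (hbd n)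
        _ _ (hmem n x0 hx0) (hmem n y0 hy0)
      refine h.trans ?_
      gcongr
      simp only [hu]
      by_cases h0 : f' n (iterSeq f n x0) = 0
      · simp [h0]
      · rw [Real.exp_log (abs_pos.2 h0)])
    (fun n => by have := hK n; linarith)
    (fun n => by have := hL n; linarith)
    q A hq hq1 hA
    (by
      have h := hlt0.le
      rw [le_div_iff₀ (by positivity)] at h
      simp only [iterSeq, id]
      linarith) n
  refine main.trans ?_
  have e : 2 * (1 / (4 * M * A)) * Real.exp K * Real.exp (- -α * n)
      = 2 * (1 / (4 * M * A)) * Real.exp (K + α * n) := by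
    rw [Real.exp_add, neg_neg]; ring
  rw [e]
  have hSn : S n ≤ K + α * n := by have := hK n; linarith
  have : |iterSeq f 0 y0 - iterSeq f 0 x0| ≤ 1 / (4 * M * A) := by
    simpa only [iterSeq, id] using hlt0.le
  gcongr
end

section
/- Let I be a non-degenerate, closed, and bounded interval, let f_n : I → I be a C² map for each n ≥ 0, and let x_0 ∈ I. Assume that {f_n″}_{n=0}^∞ is uniformly bounded on I. If the limit λ(x_0) = lim_{n→∞} (1/n) Σ_{k=0}^{n−1} ln|f_k′(x_k)| exists and satisfies −∞ < λ(x_0) < 0 (equivalently, the limsup and liminf of (1/n) Σ_{k=0}^{n−1} ln|f_k′(x_k)| are equal and lie in (−∞, 0)), then the system x_{n+1} = f_n(x_n) is exponentially asymptotically stable at x_0. -/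
open Filter Topology

lemma taylor_bound (a b : ℝ) (f f' f'' : ℝ → ℝ)
    (hderiv : ∀ x ∈ Set.Icc a b, HasDerivWithinAt f (f' x) (Set.Icc a b) x)
    (hderiv2 : ∀ x ∈ Set.Icc a b, HasDerivWithinAt f' (f'' x) (Set.Icc a b) x)
    (M : ℝ) (hM : 0 < M) (hbd : ∀ x ∈ Set.Icc a b, |f'' x| ≤ M)
    (x y : ℝ) (hx : x ∈ Set.Icc a b) (hy : y ∈ Set.Icc a b) :
    |f y - f x| ≤ |f' x| * |y - x| + M * |y - x| ^ 2 := by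
  have hsub : Set.uIcc x y ⊆ Set.Icc a b := Set.uIcc_subset_Icc hx hy
  have h1 : ∀ z ∈ Set.Icc a b, |f' z - f' x| ≤ M * |z - x| := by
    intro z hz
    exact Convex.norm_image_sub_le_of_norm_hasDerivWithin_le hderiv2 hbd (convex_Icc a b) hx hz
  have h2 := Convex.norm_image_sub_le_of_norm_hasDerivWithin_le
    (f := fun z => f z - f' x * z) (f' := fun z => f' z - f' x * 1) (s := Set.uIcc x y)
    (C := M * |y - x|) (x := x) (y := y)
    (fun z hz => ((hderiv z (hsub hz)).mono hsub).sub
      ((hasDerivWithinAt_id z _).const_mul (f' x)))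
    (by
      intro z hz
      rw [Real.norm_eq_abs, mul_one]
      refine (h1 z (hsub hz)).trans ?_
      exact mul_le_mul_of_nonneg_left (Set.abs_sub_left_of_mem_uIcc hz) hM.le)
    (convex_uIcc x y) Set.left_mem_uIcc Set.right_mem_uIcc
  simp only [Real.norm_eq_abs] at h2
  have h3 : f y - f x = f' x * (y - x) + ((f y - f' x * y) - (f x - f' x * x)) := by ring
  rw [h3]
  refine (abs_add_le _ _).trans ?_
  rw [abs_mul]
  nlinarith [h2]

lemma abs_le_exp_log (x : ℝ) : |x| ≤ Real.exp (Real.log |x|) := Real.le_exp_log _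

lemma lyap_tendsto (f f' : ℕ → ℝ → ℝ) (x0 : ℝ)
    (heq : lyapExpSup f f' x0 = lyapExpInf f f' x0)
    (hgt : ⊥ < lyapExpSup f f' x0) (hlt : lyapExpSup f f' x0 < 0) :
    ∃ L < (0:ℝ), Tendsto (fun n : ℕ => (∑ k ∈ Finset.range n,
      Real.log |f' k (iterSeq f k x0)|) / (n:ℝ)) atTop (𝓝 L) := by
  obtain ⟨L, hL⟩ : ∃ L : ℝ, lyapExpSup f f' x0 = (L : EReal) := by
    refine ⟨(lyapExpSup f f' x0).toReal, (EReal.coe_toReal ?_ hgt.ne').symm⟩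
    exact (hlt.trans EReal.zero_lt_top).ne
  refine ⟨L, ?_, ?_⟩
  · rw [hL] at hlt; exact_mod_cast hlt
  · have h := tendsto_of_liminf_eq_limsup (f := atTop) (heq.symm.trans hL) hL
    rw [← EReal.tendsto_coe]
    refine h.congr' ?_
    filter_upwards [eventually_gt_atTop 0] with n hn
    rw [div_eq_inv_mul, EReal.coe_mul, EReal.coe_inv, one_div]

/-- Corollary 4.1: `I = [a,b]` a non-degenerate closed bounded interval, `f n : I → I`
C² maps with `{f'' n}` uniformly bounded on `I`.  If the limit
`λ(x0) = lim (1/n) ∑_{k<n} ln|f_k'(x_k)|` exists (limsup = liminf) and lies in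
`(-∞, 0)`, then the system is exponentially asymptotically stable at `x0`. -/
theorem negative_lyapunov_limit_implies_exponential_stability
    (a b : ℝ) (hab : a < b) (f f' f'' : ℕ → ℝ → ℝ)
    (hmaps : ∀ n, Set.MapsTo (f n) (Set.Icc a b) (Set.Icc a b))
    (hderiv : ∀ n, ∀ x ∈ Set.Icc a b, HasDerivWithinAt (f n) (f' n x) (Set.Icc a b) x)
    (hderiv2 : ∀ n, ∀ x ∈ Set.Icc a b, HasDerivWithinAt (f' n) (f'' n x) (Set.Icc a b) x)
    (hcont2 : ∀ n, ContinuousOn (f'' n) (Set.Icc a b))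
    -- {f_n''} is uniformly bounded in I
    (M : ℝ) (hM : 0 < M) (hbd : ∀ n : ℕ, ∀ x ∈ Set.Icc a b, |f'' n x| ≤ M)
    (x0 : ℝ) (hx0 : x0 ∈ Set.Icc a b)
    -- the limit exists: limsup = liminf
    (heq : lyapExpSup f f' x0 = lyapExpInf f f' x0)
    -- and -∞ < λ(x0) < 0
    (hgt : ⊥ < lyapExpSup f f' x0) (hlt : lyapExpSup f f' x0 < 0) :
    -- exponential asymptotical stability at x0
    ∃ δ > (0:ℝ), ∃ C > (0:ℝ), ∃ μ > (0:ℝ), ∀ n : ℕ, ∀ y0 ∈ Set.Icc a b,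
      |y0 - x0| < δ → |iterSeq f n y0 - iterSeq f n x0| ≤ C * Real.exp (-μ * n) := by
  obtain ⟨L, hL0, hL⟩ := lyap_tendsto f f' x0 heq hgt hlt
  set s : ℕ → ℝ := fun n => ∑ k ∈ Finset.range n, Real.log |f' k (iterSeq f k x0)| with hs
  have hL' : Tendsto (fun n : ℕ => s n / (n:ℝ)) atTop (𝓝 L) := hL
  have hsucc : ∀ n, s (n+1) = s n + Real.log |f' n (iterSeq f n x0)| := fun n =>
    Finset.sum_range_succ _ _
  have hLs : Tendsto (fun n : ℕ => s (n+1) / (n:ℝ)) atTop (𝓝 L) := by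
    have h1 : Tendsto (fun n : ℕ => s (n+1) / ((n+1 : ℕ):ℝ)) atTop (𝓝 L) :=
      hL'.comp (tendsto_add_atTop_nat 1)
    have h2 : Tendsto (fun n : ℕ => 1 + 1 / (n:ℝ)) atTop (𝓝 (1 + 0)) :=
      tendsto_const_nhds.add tendsto_one_div_atTop_nhds_zero_nat
    have h3 := h1.mul h2
    rw [add_zero, mul_one] at h3
    refine h3.congr' ?_
    filter_upwards [eventually_gt_atTop 0] with n hn
    have : (n:ℝ) ≠ 0 := by positivity
    push_cast
    field_simp
  have hev1 : ∀ᶠ n : ℕ in atTop, s n ≤ (L/2) * n := by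
    filter_upwards [hL'.eventually_lt_const (show L < L/2 by linarith), eventually_gt_atTop 0]
      with n h hn
    have : (0:ℝ) < n := by exact_mod_cast hn
    exact ((div_lt_iff₀ this).1 h).le
  have hev2 : ∀ᶠ n : ℕ in atTop, 2 * s n - s (n+1) ≤ (L/2) * n := by
    have h := (hL'.const_mul 2).sub hLs
    filter_upwards [h.eventually_lt_const (show 2 * L - L < L/2 by linarith),
      eventually_gt_atTop 0] with n h hn
    have h0 : (0:ℝ) < n := by exact_mod_cast hn
    have h' : (2 * s n - s (n+1)) / n < L / 2 := by rw [sub_div, mul_div_assoc]; exact h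
    exact ((div_lt_iff₀ h0).1 h').le
  have hsum : Summable (fun n : ℕ => M * Real.exp (2 * s n - s (n+1))) := by
    apply Summable.mul_left
    have hg : Summable (fun n : ℕ => Real.exp (n * (L/2))) :=
      Real.summable_exp_nat_mul_iff.2 (by linarith)
    refine summable_of_isBigO_nat hg (Asymptotics.IsBigO.of_bound 1 ?_)
    filter_upwards [hev2] with n hn
    rw [one_mul, Real.norm_eq_abs, Real.norm_eq_abs, Real.abs_exp, Real.abs_exp]
    exact Real.exp_le_exp.2 (by linarith)
  set c : ℕ → ℝ := fun n => M * Real.exp (2 * s n - s (n+1)) with hc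
  have hc0 : ∀ n, 0 ≤ c n := fun n => by positivity
  set S : ℝ := ∑' n, c n with hS
  have hS0 : 0 ≤ S := tsum_nonneg hc0
  obtain ⟨B, hB⟩ : ∃ B : ℝ, ∀ n : ℕ, s n - (L/2) * n ≤ B := by
    have hb : IsBoundedUnder (· ≤ ·) atTop (fun n : ℕ => s n - (L/2) * n) :=
      ⟨0, by
        rw [eventually_map]
        filter_upwards [hev1] with n hn
        linarith⟩
    obtain ⟨B, hB⟩ := hb.bddAbove_range
    exact ⟨B, fun n => hB ⟨n, rfl⟩⟩
  have hmem : ∀ n, ∀ y ∈ Set.Icc a b, iterSeq f n y ∈ Set.Icc a b := by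
    intro n
    induction n with
    | zero => intro y hy; exact hy
    | succ n ih => intro y hy; exact hmaps n (ih y hy)
  obtain ⟨δ, hδ, hδS⟩ : ∃ δ > (0:ℝ), 4 * δ * S ≤ 1 := by
    refine ⟨1 / (4 * (S + 1)), by positivity, ?_⟩
    rw [show 4 * (1 / (4 * (S + 1))) * S = S / (S + 1) by field_simp]
    rw [div_le_one (by positivity)]
    linarith
  refine ⟨δ, hδ, 2 * δ * Real.exp B, by positivity, -(L/2), by linarith, ?_⟩
  intro n y0 hy0 hd
  have key : ∀ n, |iterSeq f n y0 - iterSeq f n x0| ≤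
      (δ + 4 * δ ^ 2 * ∑ k ∈ Finset.range n, c k) * Real.exp (s n) := by
    intro n
    induction n with
    | zero => simpa [iterSeq, hs] using hd.le
    | succ n ih =>
      have hT := taylor_bound a b (f n) (f' n) (f'' n) (hderiv n) (hderiv2 n) M hM (hbd n)
        (iterSeq f n x0) (iterSeq f n y0) (hmem n x0 hx0) (hmem n y0 hy0)
      have hg := abs_le_exp_log (f' n (iterSeq f n x0))
      have hSn : ∑ k ∈ Finset.range n, c k ≤ S := hsum.sum_le_tsum _ (fun i _ => hc0 i)
      have he0 := abs_nonneg (iterSeq f n y0 - iterSeq f n x0)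
      have hw : δ + 4 * δ ^ 2 * ∑ k ∈ Finset.range n, c k ≤ 2 * δ := by
        nlinarith [mul_le_mul_of_nonneg_left hSn (show 0 ≤ 4 * δ ^ 2 by positivity)]
      have he2 : |iterSeq f n y0 - iterSeq f n x0| ≤ 2 * δ * Real.exp (s n) :=
        ih.trans (mul_le_mul_of_nonneg_right hw (Real.exp_pos _).le)
      have hsq : |iterSeq f n y0 - iterSeq f n x0| ^ 2 ≤ (2 * δ * Real.exp (s n)) ^ 2 :=
        pow_le_pow_left₀ he0 he2 2
      have hexp1 : Real.exp (s (n+1)) =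
          Real.exp (Real.log |f' n (iterSeq f n x0)|) * Real.exp (s n) := by
        rw [← Real.exp_add, hsucc, add_comm]
      have hexp2 : c n * Real.exp (s (n+1)) = M * Real.exp (s n) ^ 2 := by
        rw [hc]
        simp only
        rw [mul_assoc, ← Real.exp_add, ← Real.exp_nat_mul]
        congr 2
        push_cast
        ring
      calc |iterSeq f (n+1) y0 - iterSeq f (n+1) x0| 
          ≤ _ := hT
        _ ≤ Real.exp (Real.log |f' n (iterSeq f n x0)|) *
              ((δ + 4 * δ ^ 2 * ∑ k ∈ Finset.range n, c k) * Real.exp (s n))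
              + M * (2 * δ * Real.exp (s n)) ^ 2 :=
            add_le_add (mul_le_mul hg ih he0 (Real.exp_pos _).le)
              (mul_le_mul_of_nonneg_left hsq hM.le)
        _ = (δ + 4 * δ ^ 2 * ∑ k ∈ Finset.range (n+1), c k) * Real.exp (s (n+1)) := by
            rw [Finset.sum_range_succ]
            linear_combination (-(δ + 4 * δ ^ 2 * ∑ k ∈ Finset.range n, c k)) * hexp1
              - 4 * δ ^ 2 * hexp2
  have hSn : ∑ k ∈ Finset.range n, c k ≤ S := hsum.sum_le_tsum _ (fun i _ => hc0 i)
  have hw : δ + 4 * δ ^ 2 * ∑ k ∈ Finset.range n, c k ≤ 2 * δ := by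
    nlinarith [mul_le_mul_of_nonneg_left hSn (show 0 ≤ 4 * δ ^ 2 by positivity)]
  refine (key n).trans ?_
  rw [mul_assoc (2 * δ), ← Real.exp_add]
  refine mul_le_mul hw (Real.exp_le_exp.2 ?_) (Real.exp_pos _).le (by positivity)
  have := hB n
  linarith
end

section
/- Consider the non-autonomous logistic system x_{n+1} = r_n x_n(1 − x_n) on I = [0,1], governed by the maps f_n(x) = r_n x(1 − x). If there exists a constant L > 1 such that L ≤ r_n ≤ 4 for all n ≥ 0, then the system is strongly sensitive at the fixed point 0; that is, there exist δ > 0 and a neighborhood U of 0 in [0,1] such that for every y_0 ∈ U with y_0 ≠ 0 there is a positive integer N with |f_0^N(y_0)| > δ, where f_0^N := f_{N−1} ∘ ⋯ ∘ f_0. -/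
open Filter Topology

/-- The non-autonomous logistic system `x_{n+1} = r_n x_n (1 - x_n)` on `[0,1]`:
if `L ≤ r_n ≤ 4` for all `n` with a constant `L > 1`, then the system is strongly
sensitive at the fixed point `0`. -/
theorem logistic_strongly_sensitive_at_zero (r : ℕ → ℝ) (L : ℝ) (hL : 1 < L)
    (hr : ∀ n : ℕ, L ≤ r n ∧ r n ≤ 4) :
    ∃ δ > (0:ℝ), ∃ U ∈ 𝓝 (0:ℝ), ∀ y0 ∈ U ∩ Set.Icc (0:ℝ) 1, y0 ≠ 0 →
      ∃ N : ℕ, 0 < N ∧ δ < |iterSeq (fun n x => r n * x * (1 - x)) N y0| := by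
  have hL0 : (0:ℝ) < L := by linarith
  set δ : ℝ := (L - 1) / (2 * L) with hδ
  have hδ0 : 0 < δ := div_pos (by linarith) (by linarith)
  have hc : L * (1 - δ) = (L + 1) / 2 := by
    rw [hδ]; field_simp; ring
  have hδ1 : δ < 1 := by
    rw [hδ, div_lt_one (by linarith)]; linarith
  refine ⟨δ, hδ0, Set.Iio δ, Iio_mem_nhds hδ0, ?_⟩
  rintro y0 ⟨hyδ, hy0, _⟩ hne
  have hyδ' : y0 < δ := hyδ
  have hpos : 0 < y0 := lt_of_le_of_ne hy0 (Ne.symm hne)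
  by_contra! hcon
  have key : ∀ n : ℕ, ((L + 1) / 2) ^ n * y0 ≤
      iterSeq (fun n x => r n * x * (1 - x)) n y0 ∧
      iterSeq (fun n x => r n * x * (1 - x)) n y0 ≤ δ := by
    intro n
    induction n with
    | zero => simp [iterSeq, hyδ'.le]
    | succ n ih =>
      refine ⟨?_, (le_abs_self _).trans (hcon (n + 1) n.succ_pos)⟩
      obtain ⟨h1, h2⟩ := ih
      simp only [iterSeq, Function.comp]
      set x := iterSeq (fun n x => r n * x * (1 - x)) n y0
      have hx : 0 ≤ x := le_trans (by positivity) h1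
      have hrn := (hr n).1
      calc ((L + 1) / 2) ^ (n + 1) * y0
          = (L + 1) / 2 * (((L + 1) / 2) ^ n * y0) := by ring
        _ ≤ (L + 1) / 2 * x := by gcongr
        _ = L * x * (1 - δ) := by rw [← hc]; ring
        _ ≤ r n * x * (1 - x) := by
          have : 0 ≤ 1 - δ := by linarith
          have : 0 ≤ r n := by linarith
          gcongr
  obtain ⟨n, hn⟩ := pow_unbounded_of_one_lt (δ / y0) (show (1:ℝ) < (L + 1) / 2 by linarith)
  rw [div_lt_iff₀ hpos] at hn
  linarith [(key n).1, (key n).2]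
end
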